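/- Let G be a finite non-cyclic abelian group whose order is not a prime power. Then the diameter of the difference graph D(G) equals 2 if the exponent of G is a square-free number; it equals 4 if G has a subgroup isomorphic to Z_{p²} × Z_{p²} for some prime p; and it equals 3 in all remaining cases. -/

import Mathlib

/-- Adjacency in the difference of the enhanced power graph and the power graph:
`⟨x, y⟩` is cyclic but neither of `x`, `y` is a power of the other. -/
def diffAdj {G : Type*} [Group G] (x y : G) : Prop :=
  IsCyclic (Subgroup.closure ({x, y} : Set G)) ∧
    (¬ ∃ k : ℤ, y = x ^ k) ∧ (¬ ∃ k : ℤ, x = y ^ k)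

/-- The vertex set of the difference graph `𝒟(G)`: the elements of `G` that are
non-isolated in the difference of the enhanced power graph and the power graph. -/
abbrev DiffVertex (G : Type*) [Group G] := {x : G // ∃ y, diffAdj x y}

/-- The difference graph `𝒟(G)` of a group `G`. -/
def diffGraph (G : Type*) [Group G] : SimpleGraph (DiffVertex G) :=
  SimpleGraph.fromRel (fun a b => diffAdj a.val b.val)

/-- A dominating set of a graph: every vertex is in `S` or adjacent to a vertex of `S`. -/
def IsDominatingSet {V : Type*} (Γ : SimpleGraph V) (S : Set V) : Prop :=
  ∀ v : V, v ∈ S ∨ ∃ u ∈ S, Γ.Adj u v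

/-- The domination number of a graph: the least size of a dominating set. -/
noncomputable def dominationNumber {V : Type*} (Γ : SimpleGraph V) : ℕ :=
  sInf {n : ℕ | ∃ S : Set V, IsDominatingSet Γ S ∧ S.ncard = n}

/-- A maximal cyclic subgroup: a cyclic subgroup not properly contained in
another cyclic subgroup. -/
def IsMaxCyclic {G : Type*} [Group G] (C : Subgroup G) : Prop :=
  IsCyclic C ∧ ∀ D : Subgroup G, IsCyclic D → C ≤ D → C = D

/-!
Let `n` be the exponent of an abelian group `G`. A cyclic subgroup `⟨x⟩` is the same thing as the
tuple of its primary components, and any choice of primary components, one for each prime divisor of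
`n`, comes from some `x`. Two elements generate a cyclic subgroup iff their components are
comparable at every prime, because the subgroups of a cyclic `p`-group form a chain; so they are
adjacent in `D(G)` iff moreover the two tuples are incomparable.

A vertex `x` has a component that can be enlarged, at `q` say, and another one that is nontrivial,
so `x` is adjacent to the `q`-part of every `z` whose `q`-component is larger. Combining such steps
joins any two vertices by a path of length at most `4`. Length `4` is needed only for two vertices
that can be enlarged at the same `q` and have incomparable `q`-components; the `q`-parts of such
vertices are `q`-th powers, and this forces `Z_{q²} × Z_{q²} ≤ G`. If `n` is square-free, then a
component that can be enlarged is trivial, and paths of length `2` suffice.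

Conversely, if the components of `u` are maximal except at `p`, then the `p`-component of every
neighbour of `u` is strictly larger than that of `u`. Taking `⟨a ^ p⟩` with `a` of order `p²` as the
`p`-component, such a `u` is at distance at least `3` from its own `p`-part, and two of them with
disjoint `p`-components are at distance at least `4`.
-/

open Subgroup

section PrimePowerOrder

variable {G : Type*} [Group G] {p k : ℕ} {x y z : G}

lemma mem_zpowers_pow_of_zpowers_ne (hp : p.Prime) (hz : z ^ p ^ k = 1) (hx : x ∈ zpowers z)
    (hne : zpowers x ≠ zpowers z) : x ∈ zpowers (z ^ p) := by
  obtain ⟨i, rfl⟩ := hx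
  obtain ⟨j, -, hj⟩ := (Nat.dvd_prime_pow hp).1 (orderOf_dvd_of_pow_eq_one hz)
  by_cases hpi : (p : ℤ) ∣ i
  · obtain ⟨l, rfl⟩ := hpi
    exact ⟨l, by simp [zpow_mul]⟩
  · refine absurd (le_antisymm (zpowers_le_of_mem (zpow_mem_zpowers z i)) ?_) hne
    rw [zpowers_le, mem_zpowers_zpow_iff, hj, ← Int.isCoprime_iff_gcd_eq_one, Nat.cast_pow]
    exact ((Nat.prime_iff_prime_int.1 hp).irreducible.coprime_iff_not_dvd.2 hpi).symm.pow_right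

lemma zpowers_le_total_of_mem_zpowers (hp : p.Prime) (hz : z ^ p ^ k = 1) (hx : x ∈ zpowers z)
    (hy : y ∈ zpowers z) : zpowers x ≤ zpowers y ∨ zpowers y ≤ zpowers x := by
  induction k generalizing z with
  | zero =>
    obtain rfl : z = 1 := by simpa using hz
    left
    simp_all
  | succ k ih =>
    by_cases hxz : zpowers x = zpowers z
    · exact .inr (hxz ▸ zpowers_le_of_mem hy)
    by_cases hyz : zpowers y = zpowers z
    · exact .inl (hyz ▸ zpowers_le_of_mem hx)
    exact ih (by rw [← pow_mul, ← pow_succ', hz]) (mem_zpowers_pow_of_zpowers_ne hp hz hx hxz)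
      (mem_zpowers_pow_of_zpowers_ne hp hz hy hyz)

lemma disjoint_zpowers_of_disjoint_zpowers_of_mem {H : Subgroup G} (hp : p.Prime)
    (hz : z ^ p ^ k = 1) (hx : x ∈ zpowers z) (hx1 : x ≠ 1) (h : Disjoint (zpowers x) H) :
    Disjoint (zpowers z) H := by
  rw [disjoint_def] at h ⊢
  intro w hwz hwH
  rcases zpowers_le_total_of_mem_zpowers hp hz hx hwz with hle | hle <;> rw [zpowers_le] at hle
  · exact absurd (h (mem_zpowers x) (zpowers_le_of_mem hwH hle)) hx1
  · exact h hle hwH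

lemma exists_mem_zpowers_orderOf_eq_prime (hp : p.Prime) (hz : z ^ p ^ k = 1) (hz1 : z ≠ 1) :
    ∃ x ∈ zpowers z, orderOf x = p := by
  have hdvd := orderOf_dvd_of_pow_eq_one hz
  obtain ⟨q, hq, hqz⟩ := Nat.exists_prime_and_dvd (mt orderOf_eq_one_iff.1 hz1)
  obtain rfl := (Nat.prime_dvd_prime_iff_eq hq hp).1 (hq.dvd_of_dvd_pow (hqz.trans hdvd))
  exact ⟨_, npow_mem_zpowers z _, orderOf_pow_orderOf_div
    (ne_zero_of_dvd_ne_zero (pow_ne_zero k hp.ne_zero) hdvd) hqz⟩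

end PrimePowerOrder

section RankTwo

variable {G : Type*} [CommGroup G] {p k : ℕ} {x y : G}

lemma exists_disjoint_zpowers_orderOf_eq_prime (hp : p.Prime) (hx : x ^ p ^ k = 1)
    (hy : y ^ p ^ k = 1) (hxy : ¬ zpowers x ≤ zpowers y) (hyx : ¬ zpowers y ≤ zpowers x) :
    ∃ u ∈ zpowers x ⊔ zpowers y, ∃ v ∈ zpowers x ⊔ zpowers y,
      orderOf u = p ∧ orderOf v = p ∧ Disjoint (zpowers u) (zpowers v) := by
  have : Fact p.Prime := ⟨hp⟩
  obtain ⟨v, hvy, hv⟩ := exists_mem_zpowers_orderOf_eq_prime hp hy (by rintro rfl; simp at hyx)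
  obtain ⟨m, hm, hm'⟩ : ∃ m, x ^ p ^ m ∉ zpowers y ∧ (x ^ p ^ m) ^ p ∈ zpowers y := by
    by_contra! h
    have hnot (m : ℕ) : x ^ p ^ m ∉ zpowers y := by
      induction m with
      | zero => simpa using hxy
      | succ m ih => rw [pow_succ, pow_mul]; exact h m ih
    exact hnot k (hx ▸ one_mem _)
  have hmx : x ^ p ^ m ∈ zpowers x := npow_mem_zpowers x _
  -- As `⟨x ^ p ^ (m + 1)⟩ < ⟨y⟩`, its generator has a `p`-th root in `⟨y⟩`.
  obtain ⟨w, hwy, hw⟩ : ∃ w ∈ zpowers y, w ^ p = (x ^ p ^ m) ^ p := by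
    obtain ⟨j, hj⟩ := mem_zpowers_pow_of_zpowers_ne hp hy hm'
      fun h ↦ hyx (h ▸ zpowers_le_of_mem (pow_mem hmx p))
    refine ⟨y ^ j, zpow_mem_zpowers y j, ?_⟩
    rw [← hj]
    simp only [← zpow_natCast, ← zpow_mul, mul_comm]
  have hu : x ^ p ^ m / w ∉ zpowers y := fun h ↦ hm (by simpa using mul_mem h hwy)
  have hup : (x ^ p ^ m / w) ^ p = 1 := by rw [div_pow, hw, div_self']
  refine ⟨x ^ p ^ m / w, div_mem (mem_sup_left hmx) (mem_sup_right hwy), v, mem_sup_right hvy,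
    orderOf_eq_prime hup fun h ↦ hu (h ▸ one_mem _), hv, disjoint_def.2 fun {g} hgu hgv ↦ ?_⟩
  by_contra hg
  have hne : zpowers g ≠ zpowers (x ^ p ^ m / w) := fun h ↦
    hu (zpowers_le.1 (h ▸ (zpowers_le_of_mem hgv).trans (zpowers_le_of_mem hvy)))
  have := mem_zpowers_pow_of_zpowers_ne (k := 1) hp (by simpa using hup) hgu hne
  simp [hup, hg] at this

lemma exists_disjoint_zpowers_orderOf_eq_prime_sq (hp : p.Prime) (hx : x ^ p ^ k = 1)
    (hy : y ^ p ^ k = 1) (hxp : x ∈ (powMonoidHom p : G →* G).range)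
    (hyp : y ∈ (powMonoidHom p : G →* G).range)
    (hxy : ¬ zpowers x ≤ zpowers y) (hyx : ¬ zpowers y ≤ zpowers x) :
    ∃ a b : G, orderOf a = p ^ 2 ∧ orderOf b = p ^ 2 ∧ Disjoint (zpowers a) (zpowers b) := by
  have hle := sup_le (zpowers_le_of_mem hxp) (zpowers_le_of_mem hyp)
  obtain ⟨u, hu, v, hv, hup, hvp, huv⟩ := exists_disjoint_zpowers_orderOf_eq_prime hp hx hy hxy hyx
  obtain ⟨a, rfl⟩ := hle hu
  obtain ⟨b, rfl⟩ := hle hv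
  have : Fact p.Prime := ⟨hp⟩
  simp only [powMonoidHom_apply] at hup hvp huv
  have orderOf_sq {c : G} (hc : orderOf (c ^ p) = p) : c ^ p ≠ 1 ∧ c ^ p ^ 2 = 1 :=
    ⟨fun h ↦ hp.ne_one (by rw [← hc, h, orderOf_one]),
      by rw [pow_two, pow_mul]; nth_rw 2 [← hc]; exact pow_orderOf_eq_one _⟩
  obtain ⟨ha1, ha⟩ := orderOf_sq hup
  obtain ⟨hb1, hb⟩ := orderOf_sq hvp
  refine ⟨a, b, orderOf_eq_prime_pow (by simpa using ha1) ha,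
    orderOf_eq_prime_pow (by simpa using hb1) hb, ?_⟩
  exact disjoint_zpowers_of_disjoint_zpowers_of_mem hp ha (npow_mem_zpowers a p) ha1
    (disjoint_zpowers_of_disjoint_zpowers_of_mem hp hb (npow_mem_zpowers b p) hb1 huv.symm).symm

end RankTwo

section ZModProd

variable {G : Type*} [CommGroup G] {m n : ℕ}

lemma exists_subgroup_mulEquiv_zmod_prod_zmod_iff :
    (∃ H : Subgroup G, Nonempty (H ≃* Multiplicative (ZMod m) × Multiplicative (ZMod n))) ↔
      ∃ a b : G, orderOf a = m ∧ orderOf b = n ∧ Disjoint (zpowers a) (zpowers b) := by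
  constructor
  · rintro ⟨H, ⟨e⟩⟩
    let f : Multiplicative (ZMod m) × Multiplicative (ZMod n) →* G :=
      H.subtype.comp e.symm.toMonoidHom
    have hf : Function.Injective f := H.subtype_injective.comp e.symm.injective
    refine ⟨f (.ofAdd 1, 1), f (1, .ofAdd 1), ?_, ?_, disjoint_def.2 ?_⟩
    · simp [orderOf_injective f hf, Prod.orderOf, orderOf_ofAdd_eq_addOrderOf, ZMod.addOrderOf_one]
    · simp [orderOf_injective f hf, Prod.orderOf, orderOf_ofAdd_eq_addOrderOf, ZMod.addOrderOf_one]
    · rintro _ ⟨i, rfl⟩ ⟨j, hij⟩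
      simp only [← map_zpow, hf.eq_iff, Prod.pow_mk, Prod.mk.injEq, one_zpow] at hij ⊢
      rw [← hij.1, Prod.mk_one_one, map_one]
  · rintro ⟨a, b, rfl, rfl, hab⟩
    let ea : zpowers a ≃* Multiplicative (ZMod (orderOf a)) := mulEquivOfCyclicCardEq
      ((Nat.card_zpowers _).trans (Nat.card_zmod _).symm)
    let eb : zpowers b ≃* Multiplicative (ZMod (orderOf b)) := mulEquivOfCyclicCardEq
      ((Nat.card_zpowers _).trans (Nat.card_zmod _).symm)
    let f : zpowers a × zpowers b →* G := (zpowers a).subtype.coprod (zpowers b).subtype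
    have hf : Function.Injective f := mul_injective_of_disjoint hab
    exact ⟨f.range, ⟨(f.ofInjective hf).symm.trans (ea.prodCongr eb)⟩⟩

end ZModProd

open Monoid (exponent ExponentExists)

section PrimaryPart

variable {M : Type*} [CommMonoid M] {p q k : ℕ}

/-- The projection of a commutative monoid of finite exponent `n` onto its `p`-primary part. It is
encoded as a power map: by Euler's theorem its exponent is `1` modulo the `p`-part of `n`, and it is
divisible by the prime-to-`p` part of `n`. It is trivial when `p` is not a prime or `n = 0`. -/
noncomputable def primaryPart (p : ℕ) : M →* M :=
  powMonoidHom (ordCompl[p] (exponent M) ^ (ordProj[p] (exponent M)).totient)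

lemma primaryPart_pow_ordProj (p : ℕ) (x : M) :
    primaryPart p x ^ ordProj[p] (exponent M) = 1 := by
  have hdvd : exponent M ∣
      ordCompl[p] (exponent M) ^ (ordProj[p] (exponent M)).totient * ordProj[p] (exponent M) := by
    nth_rw 1 [← Nat.ordProj_mul_ordCompl_eq_self (exponent M) p, mul_comm]
    exact mul_dvd_mul_right
      (dvd_pow_self _ (Nat.totient_pos.2 (Nat.ordProj_pos _ _)).ne') _
  rw [primaryPart, powMonoidHom_apply, ← pow_mul]
  exact Monoid.exponent_dvd_iff_forall_pow_eq_one.1 hdvd x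

lemma primaryPart_eq_one_of_notMem_primeFactors (hp : p ∉ (exponent M).primeFactors) (x : M) :
    primaryPart p x = 1 := by
  have : (exponent M).factorization p = 0 := by
    rwa [← Finsupp.notMem_support_iff, Nat.support_factorization]
  simpa only [this, pow_zero, pow_one] using primaryPart_pow_ordProj p x

lemma primaryPart_eq_self_of_pow_ordProj {x : M} (hx : x ^ ordProj[p] (exponent M) = 1) :
    primaryPart p x = x := by
  by_cases hp : p ∈ (exponent M).primeFactors
  · obtain ⟨hp, -, hM⟩ := Nat.mem_primeFactors.1 hp
    have hcop := ((Nat.coprime_ordCompl hp hM).pow_left ((exponent M).factorization p)).symm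
    exact (pow_eq_pow_of_modEq (Nat.ModEq.pow_totient hcop) hx).trans (pow_one x)
  · have : (exponent M).factorization p = 0 := by
      rwa [← Finsupp.notMem_support_iff, Nat.support_factorization]
    obtain rfl : x = 1 := by simpa only [this, pow_zero, pow_one] using hx
    exact map_one _

lemma primaryPart_primaryPart (p : ℕ) (x : M) : primaryPart p (primaryPart p x) = primaryPart p x :=
  primaryPart_eq_self_of_pow_ordProj (primaryPart_pow_ordProj p x)

lemma primaryPart_primaryPart_of_ne (hpq : p ≠ q) (x : M) :
    primaryPart p (primaryPart q x) = 1 := by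
  by_cases hp : p ∈ (exponent M).primeFactors
  swap
  · exact primaryPart_eq_one_of_notMem_primeFactors hp _
  by_cases hq : q ∈ (exponent M).primeFactors
  swap
  · rw [primaryPart_eq_one_of_notMem_primeFactors hq, map_one]
  have hcop : (ordProj[q] (exponent M)).Coprime (ordProj[p] (exponent M)) :=
    Nat.Coprime.pow _ _ <| (Nat.coprime_primes (Nat.prime_of_mem_primeFactors hq)
      (Nat.prime_of_mem_primeFactors hp)).2 hpq.symm
  have hdvd : ordProj[q] (exponent M) ∣ ordCompl[p] (exponent M) :=
    hcop.dvd_of_dvd_mul_left <| (Nat.ordProj_dvd _ q).trans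
      (Nat.ordProj_mul_ordCompl_eq_self (exponent M) p).symm.dvd
  obtain ⟨d, hd⟩ := hdvd.trans (dvd_pow_self _ (Nat.totient_pos.2 (Nat.ordProj_pos _ p)).ne')
  rw [primaryPart, powMonoidHom_apply, hd, pow_mul, primaryPart_pow_ordProj, one_pow]

lemma primaryPart_eq_self_of_pow_eq_one (hM : ExponentExists M) (hp : p.Prime) {x : M}
    (hx : x ^ p ^ k = 1) : primaryPart p x = x := by
  obtain ⟨j, -, hj⟩ := (Nat.dvd_prime_pow hp).1 (orderOf_dvd_of_pow_eq_one hx)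
  refine primaryPart_eq_self_of_pow_ordProj (orderOf_dvd_iff_pow_eq_one.1 ?_)
  rw [hj, ← hp.pow_dvd_iff_dvd_ordProj (Monoid.exponent_ne_zero.2 hM), ← hj]
  exact Monoid.order_dvd_exponent x

lemma eq_one_of_forall_primaryPart_eq_one (hM : ExponentExists M) {x : M}
    (h : ∀ p, primaryPart p x = 1) : x = 1 := by
  by_contra hx
  obtain ⟨p, hp, hpx⟩ := Nat.exists_prime_and_dvd (mt orderOf_eq_one_iff.1 hx)
  exact Nat.not_dvd_ordCompl hp (Monoid.exponent_ne_zero.2 hM)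
    (hp.dvd_of_dvd_pow (hpx.trans (orderOf_dvd_of_pow_eq_one (h p))))

lemma primaryPart_prod_primaryPart (p : ℕ) (f : ℕ → M) :
    primaryPart p (∏ q ∈ (exponent M).primeFactors, primaryPart q (f q)) = primaryPart p (f p) := by
  rw [map_prod, Finset.prod_eq_single p, primaryPart_primaryPart]
  · exact fun q _ hq ↦ primaryPart_primaryPart_of_ne hq.symm _
  · exact fun hp ↦ primaryPart_eq_one_of_notMem_primeFactors hp _

lemma prod_primaryPart {G : Type*} [CommGroup G] (hG : ExponentExists G) (x : G) :
    ∏ p ∈ (exponent G).primeFactors, primaryPart p x = x :=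
  div_eq_one.1 <| eq_one_of_forall_primaryPart_eq_one hG fun p ↦ by
    rw [map_div, primaryPart_prod_primaryPart p fun _ ↦ x, div_self']

end PrimaryPart

section PrimaryZpowers

variable {G : Type*} [CommGroup G] {p q k : ℕ} {x y z : G}

/-- The `p`-primary component of the cyclic subgroup generated by `x`. The subgroup itself is
encoded by the tuple `primaryZpowers x : ℕ → Subgroup G`, ordered componentwise. -/
noncomputable def primaryZpowers (x : G) (p : ℕ) : Subgroup G :=
  zpowers (primaryPart p x)

lemma primaryZpowers_le_zpowers (x : G) (p : ℕ) : primaryZpowers x p ≤ zpowers x :=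
  zpowers_le_of_mem (npow_mem_zpowers x _)

lemma zpowers_le_zpowers_iff_primaryZpowers_le (hG : ExponentExists G) :
    zpowers x ≤ zpowers y ↔ primaryZpowers x ≤ primaryZpowers y := by
  refine ⟨fun h p ↦ ?_, fun h ↦ ?_⟩
  · obtain ⟨i, rfl⟩ := zpowers_le.1 h
    exact zpowers_le_of_mem ⟨i, (map_zpow _ y i).symm⟩
  · rw [zpowers_le, ← prod_primaryPart hG x]
    exact prod_mem fun p _ ↦ primaryZpowers_le_zpowers y p (h p (mem_zpowers _))

lemma primaryZpowers_primaryPart (p : ℕ) (x : G) :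
    primaryZpowers (primaryPart p x) p = primaryZpowers x p := by
  rw [primaryZpowers, primaryPart_primaryPart, primaryZpowers]

lemma primaryZpowers_primaryPart_of_ne (hpq : p ≠ q) (x : G) :
    primaryZpowers (primaryPart q x) p = ⊥ := by
  rw [primaryZpowers, primaryPart_primaryPart_of_ne hpq, zpowers_one_eq_bot]

lemma primaryZpowers_eq_zpowers (hG : ExponentExists G) (hp : p.Prime) (hx : x ^ p ^ k = 1) :
    primaryZpowers x p = zpowers x := by
  rw [primaryZpowers, primaryPart_eq_self_of_pow_eq_one hG hp hx]

lemma prime_of_primaryZpowers_ne_bot (h : primaryZpowers x p ≠ ⊥) : p.Prime := by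
  by_contra hp
  exact h (zpowers_eq_bot.2 (primaryPart_eq_one_of_notMem_primeFactors
    (fun h ↦ hp (Nat.prime_of_mem_primeFactors h)) x))

lemma exists_forall_primaryZpowers_eq (f : ℕ → G) :
    ∃ z, ∀ p, primaryZpowers z p = primaryZpowers (f p) p :=
  ⟨_, fun p ↦ congrArg zpowers (primaryPart_prod_primaryPart p f)⟩

lemma primaryZpowers_le_total (hx : primaryZpowers x p ≤ primaryZpowers z p)
    (hy : primaryZpowers y p ≤ primaryZpowers z p) :
    primaryZpowers x p ≤ primaryZpowers y p ∨ primaryZpowers y p ≤ primaryZpowers x p := by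
  by_cases hp : p.Prime
  · exact zpowers_le_total_of_mem_zpowers hp (primaryPart_pow_ordProj p z) (zpowers_le.1 hx)
      (zpowers_le.1 hy)
  · left
    rw [not_imp_comm.1 prime_of_primaryZpowers_ne_bot hp]
    exact bot_le

end PrimaryZpowers

section DiffGraph

variable {G : Type*} [Group G] {x y : G}

lemma diffAdj_symm (h : diffAdj x y) : diffAdj y x := by
  rw [diffAdj, Set.pair_comm]
  exact ⟨h.1, h.2.symm⟩

lemma diffGraph_adj {u v : DiffVertex G} : (diffGraph G).Adj u v ↔ diffAdj u.1 v.1 := by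
  rw [diffGraph, SimpleGraph.fromRel_adj]
  refine ⟨fun h ↦ h.2.elim id diffAdj_symm, fun h ↦ ⟨?_, .inl h⟩⟩
  rintro rfl
  exact h.2.1 ⟨1, (zpow_one _).symm⟩

lemma diffGraph_edist_le_one {u v : DiffVertex G} (h : diffAdj u.1 v.1) :
    (diffGraph G).edist u v ≤ 1 :=
  (SimpleGraph.edist_eq_one_iff_adj.2 (diffGraph_adj.2 h)).le

lemma diffGraph_edist_le_two {u v : DiffVertex G} (hux : diffAdj u.1 x) (hxv : diffAdj x v.1) :
    (diffGraph G).edist u v ≤ 2 := by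
  let w : DiffVertex G := ⟨x, _, hxv⟩
  calc (diffGraph G).edist u v ≤ (diffGraph G).edist u w + (diffGraph G).edist w v :=
        SimpleGraph.edist_triangle
    _ ≤ 1 + 1 := add_le_add (diffGraph_edist_le_one hux) (diffGraph_edist_le_one hxv)
    _ = 2 := one_add_one_eq_two

end DiffGraph

section Distance

variable {V : Type*} {Γ : SimpleGraph V} {u v : V}

lemma exists_edist_le_one_of_edist_le_add_one {n : ℕ∞} (h : Γ.edist u v ≤ n + 1) :
    ∃ w, Γ.edist u w ≤ 1 ∧ Γ.edist w v ≤ n := by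
  rcases eq_or_ne n ⊤ with rfl | hn
  · exact ⟨u, by rw [SimpleGraph.edist_self]; exact zero_le_one, le_top⟩
  obtain ⟨γ, hγ⟩ := SimpleGraph.exists_walk_of_edist_ne_top
    (ne_top_of_le_ne_top (WithTop.add_ne_top.2 ⟨hn, ENat.one_ne_top⟩) h)
  cases γ with
  | nil => exact ⟨u, by rw [SimpleGraph.edist_self]; exact zero_le_one, by simp⟩
  | @cons _ w _ huw γ =>
    refine ⟨w, (SimpleGraph.edist_eq_one_iff_adj.2 huw).le, γ.edist_le.trans ?_⟩
    rw [← hγ, SimpleGraph.Walk.length_cons, Nat.cast_add, Nat.cast_one] at h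
    exact (ENat.add_le_add_iff_right ENat.one_ne_top).1 h

lemma diam_eq_of_edist_le_of_lt {n : ℕ} (hle : ∀ u v, Γ.edist u v ≤ (n + 1 : ℕ))
    (hlt : ∃ u v, n < Γ.edist u v) : Γ.diam = n + 1 := by
  obtain ⟨u, v, huv⟩ := hlt
  have hge : ((n + 1 : ℕ) : ℕ∞) ≤ Γ.ediam :=
    (Order.add_one_le_of_lt huv).trans SimpleGraph.edist_le_ediam
  rw [SimpleGraph.diam, (SimpleGraph.ediam_le_of_edist_le hle).antisymm hge, ENat.toNat_natCast]

end Distance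

section DiffAdj

lemma isCyclic_closure_pair_iff {G : Type*} [Group G] {x y : G} :
    IsCyclic (closure {x, y}) ↔ ∃ z, zpowers x ≤ zpowers z ∧ zpowers y ≤ zpowers z := by
  constructor
  · intro h
    obtain ⟨z, hz⟩ := (Subgroup.isCyclic_iff_exists_zpowers_eq_top _).1 h
    simp only [zpowers_le]
    exact ⟨z, hz ▸ subset_closure (by simp), hz ▸ subset_closure (by simp)⟩
  · rintro ⟨z, hx, hy⟩
    have hle : closure {x, y} ≤ zpowers z := by
      rw [closure_le, Set.pair_subset_iff]
      exact ⟨zpowers_le.1 hx, zpowers_le.1 hy⟩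
    exact isCyclic_of_le hle

variable {G : Type*} [CommGroup G] {p q : ℕ} {x y z : G}

lemma diffAdj_iff (hG : ExponentExists G) :
    diffAdj x y ↔
      (∀ p, primaryZpowers x p ≤ primaryZpowers y p ∨ primaryZpowers y p ≤ primaryZpowers x p) ∧
        ¬ primaryZpowers x ≤ primaryZpowers y ∧ ¬ primaryZpowers y ≤ primaryZpowers x := by
  classical
  have isPow_iff (x y : G) : (∃ k : ℤ, x = y ^ k) ↔ primaryZpowers x ≤ primaryZpowers y := by
    simp_rw [← zpowers_le_zpowers_iff_primaryZpowers_le hG, zpowers_le, mem_zpowers_iff, eq_comm]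
  rw [diffAdj, isPow_iff, isPow_iff, and_comm (a := ¬ primaryZpowers y ≤ _),
    isCyclic_closure_pair_iff]
  simp only [zpowers_le_zpowers_iff_primaryZpowers_le hG]
  refine and_congr_left fun _ ↦ ⟨fun ⟨z, hx, hy⟩ p ↦ primaryZpowers_le_total (hx p) (hy p), ?_⟩
  intro h
  obtain ⟨z, hz⟩ := exists_forall_primaryZpowers_eq
    fun p ↦ if primaryZpowers x p ≤ primaryZpowers y p then y else x
  refine ⟨z, fun p ↦ ?_, fun p ↦ ?_⟩ <;> rw [hz] <;> split_ifs with hp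
  exacts [hp, le_rfl, le_rfl, (h p).resolve_left hp]

lemma diffAdj_of_primaryZpowers_lt (hG : ExponentExists G)
    (hq : primaryZpowers x q < primaryZpowers z q)
    (hne : ∀ r ≠ q, primaryZpowers z r ≤ primaryZpowers x r)
    (hp : ¬ primaryZpowers x p ≤ primaryZpowers z p) : diffAdj x z := by
  refine (diffAdj_iff hG).2 ⟨fun r ↦ ?_, fun h ↦ hp (h p), fun h ↦ hq.not_ge (h q)⟩
  rcases eq_or_ne r q with rfl | hr
  exacts [.inl hq.le, .inr (hne r hr)]

lemma diffAdj_primaryPart (hG : ExponentExists G) (hpq : p ≠ q) (hp : primaryZpowers x p ≠ ⊥)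
    (hq : primaryZpowers x q < primaryZpowers z q) : diffAdj x (primaryPart q z) := by
  refine diffAdj_of_primaryZpowers_lt hG (p := p) (q := q) ?_ (fun r hr ↦ ?_) ?_
  · rwa [primaryZpowers_primaryPart]
  · rw [primaryZpowers_primaryPart_of_ne hr]
    exact bot_le
  · rwa [primaryZpowers_primaryPart_of_ne hpq, le_bot_iff]

lemma diffAdj_primaryPart_primaryPart (hG : ExponentExists G) (hpq : p ≠ q)
    (hp : primaryZpowers x p ≠ ⊥) (hq : primaryZpowers y q ≠ ⊥) :
    diffAdj (primaryPart p x) (primaryPart q y) := by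
  refine diffAdj_primaryPart hG hpq (by rwa [primaryZpowers_primaryPart]) ?_
  rwa [primaryZpowers_primaryPart_of_ne hpq.symm, bot_lt_iff_ne_bot]

end DiffAdj

section UpperBounds

variable {G : Type*} [CommGroup G] {p q : ℕ} {x y z : G}

/-- The `q`-component of `x` is not maximal and some other component of `x` is nontrivial, so that
`x` is joined to the `q`-primary part of every element with a larger `q`-component. -/
def ExtendableAt (q : ℕ) (x : G) : Prop :=
  (∃ z, primaryZpowers x q < primaryZpowers z q) ∧ ∃ p ≠ q, primaryZpowers x p ≠ ⊥

lemma exists_extendableAt_of_diffAdj (hG : ExponentExists G) (h : diffAdj x y) :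
    ∃ q, ExtendableAt q x := by
  obtain ⟨hcomp, hxy, hyx⟩ := (diffAdj_iff hG).1 h
  obtain ⟨p, hp⟩ := not_forall.1 hxy
  obtain ⟨q, hq⟩ := not_forall.1 hyx
  have hqlt : primaryZpowers x q < primaryZpowers y q :=
    ((hcomp q).resolve_right hq).lt_of_not_ge hq
  refine ⟨q, ⟨y, hqlt⟩, p, ?_, fun h ↦ hp (h ▸ bot_le)⟩
  rintro rfl
  exact hp hqlt.le

lemma DiffVertex.exists_extendableAt (hG : ExponentExists G) (u : DiffVertex G) :
    ∃ q, ExtendableAt q u.1 :=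
  exists_extendableAt_of_diffAdj hG u.2.choose_spec

namespace ExtendableAt

lemma diffAdj_primaryPart (hG : ExponentExists G) (hx : ExtendableAt q x)
    (hz : primaryZpowers x q < primaryZpowers z q) : diffAdj x (primaryPart q z) := by
  obtain ⟨-, p, hpq, hp⟩ := hx
  exact _root_.diffAdj_primaryPart hG hpq hp hz

lemma of_primaryZpowers_eq_bot (hx : ExtendableAt p x) (hy : ExtendableAt q y)
    (hq : primaryZpowers x q = ⊥) : ExtendableAt q x := by
  obtain ⟨-, r, -, hr⟩ := hx
  obtain ⟨⟨z, hz⟩, -⟩ := hy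
  refine ⟨⟨z, hq ▸ bot_le.trans_lt hz⟩, r, ?_, hr⟩
  rintro rfl
  exact hr hq

variable {u v : DiffVertex G}

lemma edist_le_two (hG : ExponentExists G) (hu : ExtendableAt q u.1) (hv : ExtendableAt q v.1)
    (hle : primaryZpowers u.1 q ≤ primaryZpowers v.1 q) : (diffGraph G).edist u v ≤ 2 := by
  obtain ⟨z, hz⟩ := hv.1
  exact diffGraph_edist_le_two (hu.diffAdj_primaryPart hG (hle.trans_lt hz))
    (diffAdj_symm (hv.diffAdj_primaryPart hG hz))

lemma edist_le_three (hG : ExponentExists G) (hpq : p ≠ q) (hu : ExtendableAt p u.1)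
    (hv : ExtendableAt q v.1) : (diffGraph G).edist u v ≤ 3 := by
  obtain ⟨y, hy⟩ := hu.1
  obtain ⟨z, hz⟩ := hv.1
  have huy := hu.diffAdj_primaryPart hG hy
  let w : DiffVertex G := ⟨primaryPart p y, _, diffAdj_symm huy⟩
  have hwz : diffAdj w.1 (primaryPart q z) :=
    diffAdj_primaryPart_primaryPart hG hpq (bot_le.trans_lt hy).ne' (bot_le.trans_lt hz).ne'
  calc (diffGraph G).edist u v ≤ (diffGraph G).edist u w + (diffGraph G).edist w v :=
        SimpleGraph.edist_triangle
    _ ≤ 1 + 2 := add_le_add (diffGraph_edist_le_one huy)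
        (diffGraph_edist_le_two hwz (diffAdj_symm (hv.diffAdj_primaryPart hG hz)))
    _ = 3 := by norm_num

lemma edist_le_four (hG : ExponentExists G) (hu : ExtendableAt q u.1) (hv : ExtendableAt q v.1) :
    (diffGraph G).edist u v ≤ 4 := by
  obtain ⟨y, hy⟩ := hu.1
  obtain ⟨p, hpq, hp⟩ := hu.2
  obtain ⟨z, hz⟩ := hv.1
  have hyu := diffAdj_primaryPart_primaryPart hG hpq.symm (bot_le.trans_lt hy).ne' hp
  have huz := diffAdj_primaryPart_primaryPart hG hpq hp (bot_le.trans_lt hz).ne'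
  let w : DiffVertex G := ⟨primaryPart p u.1, _, huz⟩
  calc (diffGraph G).edist u v ≤ (diffGraph G).edist u w + (diffGraph G).edist w v :=
        SimpleGraph.edist_triangle
    _ ≤ 2 + 2 := add_le_add (diffGraph_edist_le_two (hu.diffAdj_primaryPart hG hy) hyu)
        (diffGraph_edist_le_two (v := v) huz (diffAdj_symm (hv.diffAdj_primaryPart hG hz)))
    _ = 4 := by norm_num

end ExtendableAt

lemma diffGraph_edist_le_four (hG : ExponentExists G) (u v : DiffVertex G) :
    (diffGraph G).edist u v ≤ 4 := by
  obtain ⟨p, hu⟩ := u.exists_extendableAt hG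
  obtain ⟨q, hv⟩ := v.exists_extendableAt hG
  rcases eq_or_ne p q with rfl | hpq
  · exact hu.edist_le_four hG hv
  · exact (ExtendableAt.edist_le_three hG hpq hu hv).trans (by norm_num)

lemma primaryPart_mem_zpowers_pow (h : primaryZpowers x q < primaryZpowers z q) :
    primaryPart q x ∈ zpowers (primaryPart q z ^ q) :=
  mem_zpowers_pow_of_zpowers_ne (prime_of_primaryZpowers_ne_bot (bot_le.trans_lt h).ne')
    (primaryPart_pow_ordProj q z) (zpowers_le.1 h.le) h.ne

lemma ExtendableAt.primaryZpowers_le_total (hsq : ¬ ∃ p : ℕ, p.Prime ∧ ∃ a b : G,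
      orderOf a = p ^ 2 ∧ orderOf b = p ^ 2 ∧ Disjoint (zpowers a) (zpowers b))
    (hx : ExtendableAt q x) (hy : ExtendableAt q y) :
    primaryZpowers x q ≤ primaryZpowers y q ∨ primaryZpowers y q ≤ primaryZpowers x q := by
  have mem_range {x : G} (hx : ExtendableAt q x) :
      primaryPart q x ∈ (powMonoidHom q : G →* G).range := by
    obtain ⟨⟨z, hz⟩, -⟩ := hx
    exact zpowers_le_of_mem (MonoidHom.mem_range.2 ⟨_, rfl⟩) (primaryPart_mem_zpowers_pow hz)
  by_contra! h
  have hqprime : q.Prime := prime_of_primaryZpowers_ne_bot (bot_le.trans_lt hx.1.choose_spec).ne'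
  exact hsq ⟨q, hqprime, exists_disjoint_zpowers_orderOf_eq_prime_sq hqprime
    (primaryPart_pow_ordProj q x) (primaryPart_pow_ordProj q y) (mem_range hx) (mem_range hy)
    h.1 h.2⟩

lemma diffGraph_edist_le_three (hG : ExponentExists G) (hsq : ¬ ∃ p : ℕ, p.Prime ∧ ∃ a b : G,
      orderOf a = p ^ 2 ∧ orderOf b = p ^ 2 ∧ Disjoint (zpowers a) (zpowers b))
    (u v : DiffVertex G) : (diffGraph G).edist u v ≤ 3 := by
  obtain ⟨p, hu⟩ := u.exists_extendableAt hG
  obtain ⟨q, hv⟩ := v.exists_extendableAt hG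
  rcases eq_or_ne p q with rfl | hpq
  · refine le_trans ?_ (by norm_num : (2 : ℕ∞) ≤ 3)
    rcases hu.primaryZpowers_le_total hsq hv with h | h
    · exact hu.edist_le_two hG hv h
    · exact SimpleGraph.edist_comm ▸ hv.edist_le_two hG hu h
  · exact ExtendableAt.edist_le_three hG hpq hu hv

lemma ExtendableAt.primaryZpowers_eq_bot (hn : Squarefree (exponent G)) (hx : ExtendableAt q x) :
    primaryZpowers x q = ⊥ := by
  obtain ⟨⟨z, hz⟩, -⟩ := hx
  have hpow : primaryPart q z ^ q = 1 := by
    obtain ⟨d, hd⟩ := pow_dvd_pow q (hn.natFactorization_le_one q)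
    rw [pow_one] at hd
    nth_rw 2 [hd]
    rw [pow_mul, primaryPart_pow_ordProj, one_pow]
  have hmem := primaryPart_mem_zpowers_pow hz
  rw [hpow, zpowers_one_eq_bot, mem_bot] at hmem
  exact zpowers_eq_bot.2 hmem

lemma exists_diffAdj_diffAdj {r : ℕ} (hG : ExponentExists G)
    (hxp : primaryZpowers x p ≠ ⊥) (hyp : primaryZpowers y p = ⊥)
    (hxq : primaryZpowers x q = ⊥) (hyq : primaryZpowers y q ≠ ⊥)
    (hxy : ¬ primaryZpowers x r ≤ primaryZpowers y r)
    (hyx : ¬ primaryZpowers y r ≤ primaryZpowers x r) :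
    ∃ z, diffAdj x z ∧ diffAdj z y := by
  have hrp : r ≠ p := by rintro rfl; exact hyx (hyp ▸ bot_le)
  have hrq : r ≠ q := by rintro rfl; exact hxy (hxq ▸ bot_le)
  have hpq : p ≠ q := by rintro rfl; exact hxp hxq
  obtain ⟨z, hz⟩ := exists_forall_primaryZpowers_eq
    fun s ↦ if s = p then x else if s = q then y else 1
  have hzp : primaryZpowers z p = primaryZpowers x p := by rw [hz, if_pos rfl]
  have hzq : primaryZpowers z q = primaryZpowers y q := by rw [hz, if_neg hpq.symm, if_pos rfl]
  have hzs {s : ℕ} (hsp : s ≠ p) (hsq : s ≠ q) : primaryZpowers z s = ⊥ := by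
    rw [hz, if_neg hsp, if_neg hsq, primaryZpowers, map_one, zpowers_one_eq_bot]
  refine ⟨z, diffAdj_of_primaryZpowers_lt hG (p := r) (q := q) ?_ (fun s hs ↦ ?_) ?_,
    diffAdj_symm (diffAdj_of_primaryZpowers_lt hG (p := r) (q := p) ?_ (fun s hs ↦ ?_) ?_)⟩
  · rwa [hzq, hxq, bot_lt_iff_ne_bot]
  · rcases eq_or_ne s p with rfl | hsp
    exacts [hzp.le, hzs hsp hs ▸ bot_le]
  · exact fun h ↦ hxy (h.trans (hzs hrp hrq ▸ bot_le))
  · rwa [hzp, hyp, bot_lt_iff_ne_bot]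
  · rcases eq_or_ne s q with rfl | hsq
    exacts [hzq.le, hzs hs hsq ▸ bot_le]
  · exact fun h ↦ hyx (h.trans (hzs hrp hrq ▸ bot_le))

lemma diffGraph_edist_le_two_of_primaryZpowers_eq_bot {u v : DiffVertex G} (hG : ExponentExists G)
    (hup : primaryZpowers u.1 p ≠ ⊥) (hvp : primaryZpowers v.1 p = ⊥)
    (huq : primaryZpowers u.1 q = ⊥) (hvq : primaryZpowers v.1 q ≠ ⊥) :
    (diffGraph G).edist u v ≤ 2 := by
  by_cases hcomp : ∀ r, primaryZpowers u.1 r ≤ primaryZpowers v.1 r ∨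
      primaryZpowers v.1 r ≤ primaryZpowers u.1 r
  · have huv : diffAdj u.1 v.1 := by
      refine (diffAdj_iff hG).2 ⟨hcomp, fun h ↦ hup ?_, fun h ↦ hvq ?_⟩
      exacts [le_bot_iff.1 (hvp ▸ h p), le_bot_iff.1 (huq ▸ h q)]
    exact (diffGraph_edist_le_one huv).trans one_le_two
  · push Not at hcomp
    obtain ⟨r, huv, hvu⟩ := hcomp
    obtain ⟨z, huz, hzv⟩ := exists_diffAdj_diffAdj hG hup hvp huq hvq huv hvu
    exact diffGraph_edist_le_two huz hzv

lemma diffGraph_edist_le_two_of_squarefree (hG : ExponentExists G) (hn : Squarefree (exponent G))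
    (u v : DiffVertex G) : (diffGraph G).edist u v ≤ 2 := by
  obtain ⟨p, hu⟩ := u.exists_extendableAt hG
  obtain ⟨q, hv⟩ := v.exists_extendableAt hG
  have hup := hu.primaryZpowers_eq_bot hn
  have hvq := hv.primaryZpowers_eq_bot hn
  by_cases hvp : primaryZpowers v.1 p = ⊥
  · exact hu.edist_le_two hG (hv.of_primaryZpowers_eq_bot hu hvp) (hup ▸ bot_le)
  by_cases huq : primaryZpowers u.1 q = ⊥
  · exact SimpleGraph.edist_comm ▸
      hv.edist_le_two hG (hu.of_primaryZpowers_eq_bot hv huq) (hvq ▸ bot_le)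
  · exact diffGraph_edist_le_two_of_primaryZpowers_eq_bot hG huq hvq hup hvp

end UpperBounds

section LowerBounds

variable {G : Type*} [CommGroup G] {p : ℕ} {a b x z : G} {u v : DiffVertex G}

lemma not_primaryZpowers_lt_of_orderOf_eq (hG : ExponentExists G) (hp : p.Prime)
    (hx : orderOf x = ordProj[p] (exponent G)) (z : G) :
    ¬ primaryZpowers x p < primaryZpowers z p := by
  intro h
  rw [primaryZpowers_eq_zpowers hG hp (hx ▸ pow_orderOf_eq_one x)] at h
  have hz := primaryPart_pow_ordProj p z
  have : Finite (primaryZpowers z p) :=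
    finite_zpowers.2 (isOfFinOrder_iff_pow_eq_one.2 ⟨_, Nat.ordProj_pos _ p, hz⟩)
  refine h.ne (eq_of_le_of_card_ge h.le ?_)
  rw [primaryZpowers, Nat.card_zpowers, Nat.card_zpowers, hx]
  exact Nat.le_of_dvd (Nat.ordProj_pos _ p) (orderOf_dvd_of_pow_eq_one hz)

lemma exists_forall_not_primaryZpowers_lt (hG : ExponentExists G) :
    ∃ g : G, ∀ p z, ¬ primaryZpowers g p < primaryZpowers z p := by
  have hmax (p : ℕ) : ∃ x : G, ∀ z, ¬ primaryZpowers x p < primaryZpowers z p := by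
    by_cases hp : p.Prime
    · obtain ⟨x, hx⟩ := hp.exists_orderOf_eq_pow_factorization_exponent G
      exact ⟨x, not_primaryZpowers_lt_of_orderOf_eq hG hp hx⟩
    · exact ⟨1, fun z h ↦ hp (prime_of_primaryZpowers_ne_bot (bot_le.trans_lt h).ne')⟩
  choose f hf using hmax
  obtain ⟨g, hg⟩ := exists_forall_primaryZpowers_eq f
  exact ⟨g, fun p z ↦ hg p ▸ hf p z⟩

lemma exists_ne_primaryZpowers_ne_bot [Nontrivial G] (hG : ExponentExists G)
    (hpp : ¬ IsPrimePow (exponent G)) (p : ℕ) : ∃ q ≠ p, ∃ x : G, primaryZpowers x q ≠ ⊥ := by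
  obtain ⟨q, hq, hqn, hqp⟩ : ∃ q : ℕ, q.Prime ∧ q ∣ exponent G ∧ q ≠ p := by
    by_contra! h
    obtain ⟨q, hq, hqn⟩ := Nat.exists_prime_and_dvd
      (mt Monoid.exp_eq_one_iff.1 (not_subsingleton G))
    refine hpp (isPrimePow_iff_unique_prime_dvd.2 ⟨q, ⟨hq, hqn⟩, fun r hr ↦ ?_⟩)
    rw [h r hr.1 hr.2, h q hq hqn]
  obtain ⟨x, hx⟩ := hq.exists_orderOf_eq_pow_factorization_exponent G
  refine ⟨q, hqp, x, ?_⟩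
  rw [primaryZpowers_eq_zpowers hG hq (hx ▸ pow_orderOf_eq_one x), Ne, zpowers_eq_bot,
    ← orderOf_eq_one_iff, hx, Nat.pow_eq_one, not_or]
  exact ⟨hq.ne_one, (hq.factorization_pos_of_dvd (Monoid.exponent_ne_zero.2 hG) hqn).ne'⟩

lemma exists_not_primaryZpowers_le (hG : ExponentExists G) (hnc : ¬ IsCyclic G) :
    ∃ (p : ℕ) (x y : G), ¬ primaryZpowers x p ≤ primaryZpowers y p ∧
      ¬ primaryZpowers y p ≤ primaryZpowers x p := by
  obtain ⟨g, hg⟩ := exists_forall_not_primaryZpowers_lt hG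
  by_contra! h
  refine hnc ⟨g, fun x ↦ zpowers_le.1 <|
    (zpowers_le_zpowers_iff_primaryZpowers_le hG).2 fun p ↦ ?_⟩
  by_contra hx
  exact hg p x ((h p x g hx).lt_of_not_ge hx)

lemma primaryZpowers_le_or_le_of_edist_le_one (hG : ExponentExists G)
    (h : (diffGraph G).edist u v ≤ 1) (p : ℕ) :
    primaryZpowers u.1 p ≤ primaryZpowers v.1 p ∨ primaryZpowers v.1 p ≤ primaryZpowers u.1 p := by
  rcases SimpleGraph.edist_le_one_iff_adj_or_eq.1 h with h | rfl
  · exact ((diffAdj_iff hG).1 (diffGraph_adj.1 h)).1 p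
  · exact .inl le_rfl

lemma exists_one_lt_diffGraph_edist (hG : ExponentExists G) (hnc : ¬ IsCyclic G)
    (hpp : ¬ IsPrimePow (exponent G)) : ∃ u v, 1 < (diffGraph G).edist u v := by
  have : Nontrivial G := not_subsingleton_iff_nontrivial.1 fun h ↦ hnc inferInstance
  obtain ⟨p, x, y, hxy, hyx⟩ := exists_not_primaryZpowers_le hG hnc
  obtain ⟨q, hqp, t, ht⟩ := exists_ne_primaryZpowers_ne_bot hG hpp p
  have hx : primaryZpowers x p ≠ ⊥ := fun h ↦ hxy (h ▸ bot_le)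
  have hy : primaryZpowers y p ≠ ⊥ := fun h ↦ hyx (h ▸ bot_le)
  refine ⟨⟨primaryPart p x, _, diffAdj_primaryPart_primaryPart hG hqp.symm hx ht⟩,
    ⟨primaryPart p y, _, diffAdj_primaryPart_primaryPart hG hqp.symm hy ht⟩,
    lt_of_not_ge fun h ↦ ?_⟩
  have := primaryZpowers_le_or_le_of_edist_le_one hG h p
  simp only [primaryZpowers_primaryPart] at this
  exact this.elim hxy hyx

lemma exists_diffVertex_of_primaryZpowers_lt (hG : ExponentExists G)
    (hpp : ¬ IsPrimePow (exponent G)) (hab : primaryZpowers a p < primaryZpowers b p) :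
    ∃ u : DiffVertex G, primaryZpowers u.1 p = primaryZpowers a p ∧
      (∃ q ≠ p, primaryZpowers u.1 q ≠ ⊥) ∧
      ∀ z, diffAdj u.1 z → primaryZpowers u.1 p < primaryZpowers z p := by
  have : Nontrivial G := ⟨_, _, zpowers_eq_bot.not.1 (bot_le.trans_lt hab).ne'⟩
  obtain ⟨g, hg⟩ := exists_forall_not_primaryZpowers_lt hG
  obtain ⟨q, hqp, t, ht⟩ := exists_ne_primaryZpowers_ne_bot hG hpp p
  obtain ⟨x, hx⟩ := exists_forall_primaryZpowers_eq fun r ↦ if r = p then a else g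
  have hxp : primaryZpowers x p = primaryZpowers a p := by rw [hx, if_pos rfl]
  have hxr {r : ℕ} (hr : r ≠ p) : primaryZpowers x r = primaryZpowers g r := by
    rw [hx, if_neg hr]
  have hxq : primaryZpowers x q ≠ ⊥ := fun h ↦
    hg q t (hxr hqp ▸ h ▸ bot_lt_iff_ne_bot.2 ht)
  refine ⟨⟨x, _, diffAdj_primaryPart hG hqp hxq (hxp ▸ hab)⟩, hxp, ⟨q, hqp, hxq⟩, fun z hz ↦ ?_⟩
  obtain ⟨hcomp, -, hzx⟩ := (diffAdj_iff hG).1 hz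
  obtain ⟨r, hr⟩ := not_forall.1 hzx
  have hlt : primaryZpowers x r < primaryZpowers z r := ((hcomp r).resolve_right hr).lt_of_not_ge hr
  obtain rfl : r = p := by
    by_contra hrp
    exact hg r z (hxr hrp ▸ hlt)
  exact hlt

lemma pow_ne_one_of_orderOf_eq_sq (hp : p.Prime) (ha : orderOf a = p ^ 2) : a ^ p ≠ 1 :=
  pow_ne_one_of_lt_orderOf hp.ne_zero (by rw [ha]; exact lt_self_pow₀ hp.one_lt one_lt_two)

lemma zpowers_pow_lt_zpowers_of_dvd_orderOf (hp : p ≠ 1) (ha : p ∣ orderOf a) :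
    zpowers (a ^ p) < zpowers a := by
  refine (zpowers_le_of_mem (npow_mem_zpowers a p)).lt_of_not_ge fun h ↦ hp ?_
  rw [zpowers_le, mem_zpowers_pow_iff] at h
  exact Nat.Coprime.eq_one_of_dvd h ha

lemma exists_diffVertex_of_orderOf_eq_sq (hG : ExponentExists G)
    (hpp : ¬ IsPrimePow (exponent G)) (hp : p.Prime) (ha : orderOf a = p ^ 2) :
    ∃ u : DiffVertex G, primaryZpowers u.1 p = zpowers (a ^ p) ∧
      (∃ q ≠ p, primaryZpowers u.1 q ≠ ⊥) ∧
      ∀ z, diffAdj u.1 z → primaryZpowers u.1 p < primaryZpowers z p := by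
  have hap : (a ^ p) ^ p ^ 1 = 1 := by
    rw [← pow_mul, pow_one, ← pow_two, ← ha, pow_orderOf_eq_one]
  have hlt := zpowers_pow_lt_zpowers_of_dvd_orderOf hp.ne_one (ha ▸ dvd_pow_self p two_ne_zero)
  rw [← primaryZpowers_eq_zpowers hG hp hap,
    ← primaryZpowers_eq_zpowers hG hp (ha ▸ pow_orderOf_eq_one a)] at hlt
  rw [← primaryZpowers_eq_zpowers hG hp hap]
  exact exists_diffVertex_of_primaryZpowers_lt hG hpp hlt

lemma not_primaryZpowers_le_of_diffAdj_primaryPart (hG : ExponentExists G)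
    (h : diffAdj (primaryPart p x) z) : ¬ primaryZpowers x p ≤ primaryZpowers z p := by
  refine fun hle ↦ ((diffAdj_iff hG).1 h).2.1 fun q ↦ ?_
  rcases eq_or_ne q p with rfl | hqp
  · rwa [primaryZpowers_primaryPart]
  · rw [primaryZpowers_primaryPart_of_ne hqp]
    exact bot_le

lemma primaryZpowers_le_of_edist_le_one
    (hu : ∀ z, diffAdj u.1 z → primaryZpowers u.1 p < primaryZpowers z p)
    (h : (diffGraph G).edist u v ≤ 1) : primaryZpowers u.1 p ≤ primaryZpowers v.1 p := by
  rcases SimpleGraph.edist_le_one_iff_adj_or_eq.1 h with h | rfl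
  exacts [(hu _ (diffGraph_adj.1 h)).le, le_rfl]

lemma exists_two_lt_diffGraph_edist (hG : ExponentExists G)
    (hpp : ¬ IsPrimePow (exponent G)) (hp : p.Prime) (ha : orderOf a = p ^ 2) :
    ∃ u v, 2 < (diffGraph G).edist u v := by
  obtain ⟨u, hup, ⟨q, hqp, huq⟩, hu⟩ := exists_diffVertex_of_orderOf_eq_sq hG hpp hp ha
  have hup : primaryZpowers u.1 p ≠ ⊥ := by
    rw [hup, Ne, zpowers_eq_bot]
    exact pow_ne_one_of_orderOf_eq_sq hp ha
  obtain ⟨v, hv⟩ : ∃ v : DiffVertex G, v.1 = primaryPart p u.1 :=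
    ⟨⟨_, _, diffAdj_primaryPart_primaryPart hG hqp.symm hup huq⟩, rfl⟩
  refine ⟨u, v, lt_of_not_ge fun h ↦ ?_⟩
  obtain ⟨z, huz, hzv⟩ := exists_edist_le_one_of_edist_le_add_one
    (h.trans_eq one_add_one_eq_two.symm)
  rcases SimpleGraph.edist_le_one_iff_adj_or_eq.1 hzv with hzv | rfl
  · have hadj := diffAdj_symm (diffGraph_adj.1 hzv)
    rw [hv] at hadj
    exact not_primaryZpowers_le_of_diffAdj_primaryPart hG hadj
      (primaryZpowers_le_of_edist_le_one hu huz)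
  rcases SimpleGraph.edist_le_one_iff_adj_or_eq.1 huz with huz | rfl
  · have hlt := hu _ (diffGraph_adj.1 huz)
    rw [hv, primaryZpowers_primaryPart] at hlt
    exact hlt.false
  · rw [hv, primaryZpowers_primaryPart_of_ne hqp] at huq
    exact huq rfl

lemma exists_three_lt_diffGraph_edist (hG : ExponentExists G)
    (hpp : ¬ IsPrimePow (exponent G)) (hp : p.Prime) (ha : orderOf a = p ^ 2)
    (hb : orderOf b = p ^ 2) (hab : Disjoint (zpowers a) (zpowers b)) :
    ∃ u v, 3 < (diffGraph G).edist u v := by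
  obtain ⟨u, hup, -, hu⟩ := exists_diffVertex_of_orderOf_eq_sq hG hpp hp ha
  obtain ⟨v, hvp, -, hv⟩ := exists_diffVertex_of_orderOf_eq_sq hG hpp hp hb
  refine ⟨u, v, lt_of_not_ge fun h ↦ ?_⟩
  obtain ⟨z, huz, hzv⟩ := exists_edist_le_one_of_edist_le_add_one
    (h.trans_eq two_add_one_eq_three.symm)
  obtain ⟨w, hzw, hwv⟩ := exists_edist_le_one_of_edist_le_add_one
    (hzv.trans_eq one_add_one_eq_two.symm)
  have hle_z := primaryZpowers_le_of_edist_le_one hu huz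
  have hle_w := primaryZpowers_le_of_edist_le_one hv (SimpleGraph.edist_comm ▸ hwv)
  have huv : primaryZpowers u.1 p ≤ primaryZpowers v.1 p ∨
      primaryZpowers v.1 p ≤ primaryZpowers u.1 p := by
    rcases primaryZpowers_le_or_le_of_edist_le_one hG hzw p with h | h
    · exact primaryZpowers_le_total (hle_z.trans h) hle_w
    · exact primaryZpowers_le_total hle_z (hle_w.trans h)
  rw [hup, hvp] at huv
  have hdisj : Disjoint (zpowers (a ^ p)) (zpowers (b ^ p)) :=
    hab.mono (zpowers_le_of_mem (npow_mem_zpowers a p)) (zpowers_le_of_mem (npow_mem_zpowers b p))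
  rcases huv with h | h
  · exact pow_ne_one_of_orderOf_eq_sq hp ha (zpowers_eq_bot.1 (hdisj.eq_bot_of_le h))
  · exact pow_ne_one_of_orderOf_eq_sq hp hb (zpowers_eq_bot.1 (hdisj.symm.eq_bot_of_le h))

lemma exists_orderOf_eq_sq_of_not_squarefree (hG : ExponentExists G)
    (hn : ¬ Squarefree (exponent G)) : ∃ p : ℕ, p.Prime ∧ ∃ a : G, orderOf a = p ^ 2 := by
  simp only [Nat.squarefree_iff_prime_squarefree, not_forall, not_not] at hn
  obtain ⟨p, hp, hpn⟩ := hn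
  obtain ⟨x, hx⟩ := hp.exists_orderOf_eq_pow_factorization_exponent G
  have hdvd : p ^ 2 ∣ orderOf x := by
    rw [hx, ← hp.pow_dvd_iff_dvd_ordProj (Monoid.exponent_ne_zero.2 hG), pow_two]
    exact hpn
  exact ⟨p, hp, _, orderOf_pow_orderOf_div (hG.orderOf_pos x).ne' hdvd⟩

end LowerBounds

lemma isPrimePow_card_of_isPrimePow_exponent {G : Type*} [CommGroup G] [Finite G]
    (h : IsPrimePow (exponent G)) : IsPrimePow (Nat.card G) := by
  have hcard : Nat.card G ≠ 1 := fun hG ↦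
    h.ne_one (Nat.dvd_one.1 (hG ▸ Group.exponent_dvd_nat_card))
  have hdvd := card_dvd_exponent_pow_rank G
  refine (h.pow fun hrank ↦ hcard ?_).dvd hdvd hcard
  exact Nat.dvd_one.1 (by simpa only [hrank, pow_zero] using hdvd)

theorem abelian_diffGraph_diam_general (G : Type*) [CommGroup G] (hG : ExponentExists G)
    (hnc : ¬ IsCyclic G) (hpp : ¬ IsPrimePow (exponent G)) :
    (Squarefree (exponent G) → (diffGraph G).diam = 2) ∧
    ((∃ p : ℕ, p.Prime ∧ ∃ H : Subgroup G,
        Nonempty (H ≃* (Multiplicative (ZMod (p ^ 2)) × Multiplicative (ZMod (p ^ 2))))) →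
      (diffGraph G).diam = 4) ∧
    (¬ Squarefree (exponent G) →
      ¬ (∃ p : ℕ, p.Prime ∧ ∃ H : Subgroup G,
          Nonempty (H ≃* (Multiplicative (ZMod (p ^ 2)) × Multiplicative (ZMod (p ^ 2))))) →
      (diffGraph G).diam = 3) := by
  simp only [exists_subgroup_mulEquiv_zmod_prod_zmod_iff]
  refine ⟨fun hn ↦ ?_, ?_, fun hn hsq ↦ ?_⟩
  · exact diam_eq_of_edist_le_of_lt (diffGraph_edist_le_two_of_squarefree hG hn)
      (exists_one_lt_diffGraph_edist hG hnc hpp)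
  · rintro ⟨p, hp, a, b, ha, hb, hab⟩
    exact diam_eq_of_edist_le_of_lt (diffGraph_edist_le_four hG)
      (exists_three_lt_diffGraph_edist hG hpp hp ha hb hab)
  · obtain ⟨p, hp, a, ha⟩ := exists_orderOf_eq_sq_of_not_squarefree hG hn
    exact diam_eq_of_edist_le_of_lt (diffGraph_edist_le_three hG hsq)
      (exists_two_lt_diffGraph_edist hG hpp hp ha)

/-- Corollary 5.10: for a finite non-cyclic abelian group `G` whose order is not a prime
power, the diameter of `𝒟(G)` equals `2` if `exp(G)` is square-free, `4` if `G` has a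
subgroup isomorphic to `ℤ_{p²} × ℤ_{p²}` for some prime `p`, and `3` otherwise. -/
theorem abelian_diffGraph_diam
    (G : Type*) [CommGroup G] [Finite G]
    (hnc : ¬ IsCyclic G) (hpp : ¬ IsPrimePow (Nat.card G)) :
    (Squarefree (Monoid.exponent G) → (diffGraph G).diam = 2) ∧
    ((∃ (p : ℕ), p.Prime ∧ ∃ H : Subgroup G,
        Nonempty (H ≃* (Multiplicative (ZMod (p ^ 2)) × Multiplicative (ZMod (p ^ 2))))) →
      (diffGraph G).diam = 4) ∧
    (¬ Squarefree (Monoid.exponent G) →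
      ¬ (∃ (p : ℕ), p.Prime ∧ ∃ H : Subgroup G,
          Nonempty (H ≃* (Multiplicative (ZMod (p ^ 2)) × Multiplicative (ZMod (p ^ 2))))) →
      (diffGraph G).diam = 3) :=
  abelian_diffGraph_diam_general G .of_finite hnc (mt isPrimePow_card_of_isPrimePow_exponent hpp)
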